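/- Let K be a relatively congruence distributive quasivariety of Heyting algebras, let A1, A2 be Heyting algebras, let B be a member of K_rfsi, and let h : A1 × A2 → B be a Heyting algebra homomorphism. Then there exist i ∈ {1,2} and a Heyting algebra homomorphism g : A_i → B such that h = g ∘ π_i, where π_i : A1 × A2 → A_i is the canonical projection. -/

import Mathlib

namespace Impl

open FirstOrder Language

universe u v

/-- A bundled algebra (first-order structure) for the language `L`. -/
structure Alg (L : FirstOrder.Language.{u, u}) : Type (u + 1) where
  carrier : Type u
  [str : L.Structure carrier]

attribute [instance] Alg.str

variable {L : FirstOrder.Language.{u, u}}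

/-- The direct product of a family of algebras. -/
def Alg.pi {ι : Type u} (A : ι → Alg L) : Alg L where
  carrier := ∀ i, (A i).carrier
  str :=
    { funMap := fun {k} f v i => Structure.funMap f fun j => v j i
      RelMap := fun {k} r v => ∀ i, Structure.RelMap r fun j => v j i }

/-- The binary direct product of two algebras. -/
def Alg.prod (A B : Alg L) : Alg L where
  carrier := A.carrier × B.carrier
  str :=
    { funMap := fun {k} f v =>
        (Structure.funMap f fun j => (v j).1, Structure.funMap f fun j => (v j).2)
      RelMap := fun {k} r v =>
        Structure.RelMap r (fun j => (v j).1) ∧ Structure.RelMap r fun j => (v j).2 }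

/-- The ultraproduct of a family of algebras with respect to an ultrafilter. -/
def Alg.uprod {ι : Type u} (F : Ultrafilter ι) (A : ι → Alg L) : Alg L where
  carrier := Filter.Product (F : Filter ι) fun i => (A i).carrier
  str := inferInstance

/-- Closure under isomorphic copies. -/
def ClosedUnderIso (K : Set (Alg L)) : Prop :=
  ∀ A B : Alg L, A ∈ K → Nonempty (A.carrier ≃[L] B.carrier) → B ∈ K

/-- Closure under subalgebras (up to the identification of a subalgebra with an embedding). -/
def ClosedUnderSub (K : Set (Alg L)) : Prop :=
  ∀ A B : Alg L, B ∈ K → Nonempty (A.carrier ↪[L] B.carrier) → A ∈ K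

/-- Closure under direct products. -/
def ClosedUnderProd (K : Set (Alg L)) : Prop :=
  ∀ (ι : Type u) (A : ι → Alg L), (∀ i, A i ∈ K) → Alg.pi A ∈ K

/-- Closure under finite direct products. -/
def ClosedUnderFinProd (K : Set (Alg L)) : Prop :=
  ∀ (ι : Type u), Finite ι → ∀ A : ι → Alg L, (∀ i, A i ∈ K) → Alg.pi A ∈ K

/-- Closure under homomorphic images. -/
def ClosedUnderHomImg (K : Set (Alg L)) : Prop :=
  ∀ A B : Alg L, A ∈ K → ∀ h : A.carrier →[L] B.carrier, Function.Surjective h → B ∈ K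

/-- Closure under ultraproducts. -/
def ClosedUnderUprod (K : Set (Alg L)) : Prop :=
  ∀ (ι : Type u) (F : Ultrafilter ι) (A : ι → Alg L), (∀ i, A i ∈ K) → Alg.uprod F A ∈ K

/-- A universal class: a class closed under isomorphic copies, subalgebras and ultraproducts. -/
def IsUniversalClass (K : Set (Alg L)) : Prop :=
  ClosedUnderIso K ∧ ClosedUnderSub K ∧ ClosedUnderUprod K

/-- A quasivariety: a class closed under isomorphic copies, subalgebras, direct products and
ultraproducts. -/
def IsQuasivariety (K : Set (Alg L)) : Prop :=
  ClosedUnderIso K ∧ ClosedUnderSub K ∧ ClosedUnderProd K ∧ ClosedUnderUprod K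

/-- A variety: a class closed under homomorphic images, subalgebras and direct products. -/
def IsVariety (K : Set (Alg L)) : Prop :=
  ClosedUnderHomImg K ∧ ClosedUnderSub K ∧ ClosedUnderProd K

/-- The least quasivariety containing `K`. -/
def QGen (K : Set (Alg L)) : Set (Alg L) :=
  ⋂₀ { M : Set (Alg L) | IsQuasivariety M ∧ K ⊆ M }

/-- The least variety containing `K`. -/
def VGen (K : Set (Alg L)) : Set (Alg L) :=
  ⋂₀ { M : Set (Alg L) | IsVariety M ∧ K ⊆ M }

/-- An elementary class: the class of all models of some first-order theory. -/
def IsElementary (K : Set (Alg L)) : Prop :=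
  ∃ T : L.Theory, ∀ A : Alg L, A ∈ K ↔ ∀ φ ∈ T, A.carrier ⊨ φ

/-- Finite conjunctions of equations (with `⊤` as the empty conjunction). -/
inductive IsConjEq {α : Type v} : ∀ {k : ℕ}, L.BoundedFormula α k → Prop
  | top {k} : IsConjEq (⊤ : L.BoundedFormula α k)
  | equal {k} (t₁ t₂ : L.Term (α ⊕ Fin k)) : IsConjEq (BoundedFormula.equal t₁ t₂)
  | inf {k} {φ ψ : L.BoundedFormula α k} : IsConjEq φ → IsConjEq ψ → IsConjEq (φ ⊓ ψ)

/-- Positive quantifier-free formulas: built from equations, `⊤` and `⊥` using `⊓` and `⊔`. -/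
inductive IsPosQF {α : Type v} : ∀ {k : ℕ}, L.BoundedFormula α k → Prop
  | falsum {k} : IsPosQF (⊥ : L.BoundedFormula α k)
  | top {k} : IsPosQF (⊤ : L.BoundedFormula α k)
  | equal {k} (t₁ t₂ : L.Term (α ⊕ Fin k)) : IsPosQF (BoundedFormula.equal t₁ t₂)
  | inf {k} {φ ψ : L.BoundedFormula α k} : IsPosQF φ → IsPosQF ψ → IsPosQF (φ ⊓ ψ)
  | sup {k} {φ ψ : L.BoundedFormula α k} : IsPosQF φ → IsPosQF ψ → IsPosQF (φ ⊔ ψ)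

/-- Primitive positive (pp) formulas: existentially quantified finite conjunctions of
equations. -/
inductive IsPP {α : Type v} : ∀ {k : ℕ}, L.BoundedFormula α k → Prop
  | of_conjEq {k} {φ : L.BoundedFormula α k} : IsConjEq φ → IsPP φ
  | ex {k} {φ : L.BoundedFormula α (k + 1)} : IsPP φ → IsPP φ.ex

/-- Existential positive formulas: existentially quantified positive quantifier-free
formulas. -/
inductive IsExistPos {α : Type v} : ∀ {k : ℕ}, L.BoundedFormula α k → Prop
  | of_posQF {k} {φ : L.BoundedFormula α k} : IsPosQF φ → IsExistPos φ
  | ex {k} {φ : L.BoundedFormula α (k + 1)} : IsExistPos φ → IsExistPos φ.ex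

/-- Two formulas are equivalent in a class of algebras. -/
def EquivOn (K : Set (Alg L)) {α : Type v} (φ ψ : L.Formula α) : Prop :=
  ∀ A : Alg L, A ∈ K → ∀ x : α → A.carrier, φ.Realize x ↔ ψ.Realize x

/-- A formula is preserved by homomorphisms in `K`. -/
def PreservedByHomsOn (K : Set (Alg L)) {α : Type v} (φ : L.Formula α) : Prop :=
  ∀ A B : Alg L, A ∈ K → B ∈ K → ∀ (h : A.carrier →[L] B.carrier) (x : α → A.carrier),
    φ.Realize x → φ.Realize fun a => h (x a)

/-- A formula is preserved by direct products in `K`. -/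
def PreservedByProdsOn (K : Set (Alg L)) {α : Type v} (φ : L.Formula α) : Prop :=
  ∀ (ι : Type u) (A : ι → Alg L), (∀ i, A i ∈ K) → ∀ x : α → (Alg.pi A).carrier,
    (∀ i, φ.Realize fun a => x a i) → φ.Realize x

/-- An `n`-ary partial function on a class of algebras `K`: a family assigning to each member of
`K` an `n`-ary partial function on its carrier. -/
def PartialFunOn (K : Set (Alg L)) (n : ℕ) :=
  ∀ (A : Alg L), A ∈ K → ((Fin n → A.carrier) →. A.carrier)

/-- A partial function on `K` is defined by the formula `φ(x₁, …, xₙ, y)` (the last variable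
being the output) when its graph on each member of `K` is the solution set of `φ`. -/
def DefinedBy {K : Set (Alg L)} {n : ℕ} (f : PartialFunOn K n)
    (φ : L.Formula (Fin (n + 1))) : Prop :=
  ∀ (A : Alg L) (hA : A ∈ K) (x : Fin n → A.carrier) (b : A.carrier),
    b ∈ f A hA x ↔ φ.Realize (Fin.snoc x b)

/-- The formula `φ(x₁, …, xₙ, y)` is functional in `K`: for all inputs there is at most one
output satisfying it. -/
def FunctionalIn (K : Set (Alg L)) {n : ℕ} (φ : L.Formula (Fin (n + 1))) : Prop :=
  ∀ A : Alg L, A ∈ K → ∀ (x : Fin n → A.carrier) (b₁ b₂ : A.carrier),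
    φ.Realize (Fin.snoc x b₁) → φ.Realize (Fin.snoc x b₂) → b₁ = b₂

/-- A partial function on `K` is an operation of `K` when it is preserved by all homomorphisms
between members of `K`. -/
def IsOperationOn {K : Set (Alg L)} {n : ℕ} (f : PartialFunOn K n) : Prop :=
  ∀ (A B : Alg L) (hA : A ∈ K) (hB : B ∈ K) (h : A.carrier →[L] B.carrier)
    (x : Fin n → A.carrier) (b : A.carrier),
    b ∈ f A hA x → h b ∈ f B hB fun i => h (x i)

/-- A partial function on `K` is implicit when it is defined by some formula. -/
def IsImplicit {K : Set (Alg L)} {n : ℕ} (f : PartialFunOn K n) : Prop :=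
  ∃ φ : L.Formula (Fin (n + 1)), DefinedBy f φ

/-- An implicit operation of `K`: a partial function that is both implicit and an operation. -/
def IsImplicitOp {K : Set (Alg L)} {n : ℕ} (f : PartialFunOn K n) : Prop :=
  IsImplicit f ∧ IsOperationOn f

/-- An implicit operation is extendable when every tuple in every member of `K` lies in the
domain of the operation in some extension inside `K`. -/
def Extendable {K : Set (Alg L)} {n : ℕ} (f : PartialFunOn K n) : Prop :=
  ∀ (A : Alg L) (hA : A ∈ K) (x : Fin n → A.carrier),
    ∃ (B : Alg L) (hB : B ∈ K) (e : A.carrier ↪[L] B.carrier),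
      (f B hB fun i => e (x i)).Dom

/-- The dominion of a subset `s` of `M` relative to the class `K`. -/
def dominion (K : Set (Alg L)) (M : Type u) [L.Structure M] (s : Set M) : Set M :=
  { b | ∀ C : Alg L, C ∈ K → ∀ g h : M →[L] C.carrier, (∀ a ∈ s, g a = h a) → g b = h b }

/-- The strong epimorphism surjectivity property. -/
def StrongES (K : Set (Alg L)) : Prop :=
  ∀ (A B : Alg L), A ∈ K → B ∈ K → ∀ (f : A.carrier →[L] B.carrier) (b : B.carrier),
    b ∉ Set.range f →
      ∃ C : Alg L, C ∈ K ∧ ∃ g h : B.carrier →[L] C.carrier,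
        (∀ a : A.carrier, g (f a) = h (f a)) ∧ g b ≠ h b

/-- The weak epimorphism surjectivity property: every `K`-epimorphism between finitely
generated members of `K` is surjective. -/
def WeakES (K : Set (Alg L)) : Prop :=
  ∀ (A B : Alg L), A ∈ K → B ∈ K →
    Structure.FG L A.carrier → Structure.FG L B.carrier →
      ∀ f : A.carrier →[L] B.carrier,
        (∀ C : Alg L, C ∈ K → ∀ g h : B.carrier →[L] C.carrier,
          (∀ a : A.carrier, g (f a) = h (f a)) → g = h) →
        Function.Surjective f

/-- The amalgamation property. -/
def HasAmalgamation (K : Set (Alg L)) : Prop :=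
  ∀ (A B C : Alg L), A ∈ K → B ∈ K → C ∈ K →
    ∀ (f : A.carrier ↪[L] B.carrier) (g : A.carrier ↪[L] C.carrier),
      ∃ D : Alg L, D ∈ K ∧ ∃ (f' : B.carrier ↪[L] D.carrier) (g' : C.carrier ↪[L] D.carrier),
        ∀ a : A.carrier, f' (f a) = g' (g a)

/-- A finitely presented member of `K`: an algebra in `K` with a finite presentation, phrased
through the usual universal property of `T(X)/Cg_K(Y)`. -/
def FinitelyPresentedIn (K : Set (Alg L)) (B : Alg L) : Prop :=
  B ∈ K ∧ ∃ (m : ℕ) (Y : Finset (L.Term (Fin m) × L.Term (Fin m))) (b : Fin m → B.carrier),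
    Substructure.closure L (Set.range b) = ⊤ ∧
    (∀ p ∈ Y, p.1.realize b = p.2.realize b) ∧
    ∀ C : Alg L, C ∈ K → ∀ x : Fin m → C.carrier,
      (∀ p ∈ Y, p.1.realize x = p.2.realize x) →
        ∃ g : B.carrier →[L] C.carrier, ∀ i, g (b i) = x i

/-- Subdirectly irreducible relative to `K`. -/
def IsRSI (K : Set (Alg L)) (A : Alg L) : Prop :=
  A ∈ K ∧ ∀ (ι : Type u) (B : ι → Alg L), (∀ i, B i ∈ K) →
    ∀ h : A.carrier ↪[L] (Alg.pi B).carrier,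
      (∀ i, Function.Surjective fun a => h a i) →
        ∃ i, Function.Bijective fun a => h a i

/-- Finitely subdirectly irreducible relative to `K`. -/
def IsRFSI (K : Set (Alg L)) (A : Alg L) : Prop :=
  A ∈ K ∧ ∀ (ι : Type u), Finite ι → ∀ B : ι → Alg L, (∀ i, B i ∈ K) →
    ∀ h : A.carrier ↪[L] (Alg.pi B).carrier,
      (∀ i, Function.Surjective fun a => h a i) →
        ∃ i, Function.Bijective fun a => h a i

/-- A congruence on an algebra: an equivalence relation compatible with all the operations. -/
def IsCongruenceOn (A : Alg L) (θ : A.carrier → A.carrier → Prop) : Prop :=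
  Equivalence θ ∧
    ∀ (k : ℕ) (f : L.Functions k) (x y : Fin k → A.carrier),
      (∀ i, θ (x i) (y i)) → θ (Structure.funMap f x) (Structure.funMap f y)

/-- The quotient of an algebra by (the setoid of) an equivalence relation; when the relation is
a congruence this is the quotient algebra. -/
noncomputable def Alg.quot (A : Alg L) (θ : A.carrier → A.carrier → Prop) (h : Equivalence θ) :
    Alg L where
  carrier := Quotient (⟨θ, h⟩ : Setoid A.carrier)
  str :=
    { funMap := fun {k} f v => Quotient.mk _ (Structure.funMap f fun i => (v i).out)
      RelMap := fun {k} r v => Structure.RelMap r fun i => (v i).out }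

/-- A `K`-congruence of `A`: a congruence whose quotient lies in `K`. -/
def IsRelCong (K : Set (Alg L)) (A : Alg L) (θ : A.carrier → A.carrier → Prop) : Prop :=
  ∃ h : IsCongruenceOn A θ, Alg.quot A θ h.1 ∈ K

/-- The join of two relations in the lattice of `K`-congruences of `A`. -/
def relCongJoin (K : Set (Alg L)) (A : Alg L)
    (θ φ : A.carrier → A.carrier → Prop) (x y : A.carrier) : Prop :=
  ∀ ρ : A.carrier → A.carrier → Prop, IsRelCong K A ρ →
    (∀ a b, θ a b → ρ a b) → (∀ a b, φ a b → ρ a b) → ρ x y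

/-- Relative congruence distributivity: the lattice of `K`-congruences of each member of `K`
is distributive. -/
def RelCongDistributive (K : Set (Alg L)) : Prop :=
  ∀ A : Alg L, A ∈ K → ∀ θ φ ψ : A.carrier → A.carrier → Prop,
    IsRelCong K A θ → IsRelCong K A φ → IsRelCong K A ψ →
      ∀ x y : A.carrier,
        (θ x y ∧ relCongJoin K A φ ψ x y) ↔
          relCongJoin K A (fun a b => θ a b ∧ φ a b) (fun a b => θ a b ∧ ψ a b) x y

/-- The join of two relations in the lattice of congruences of `A`. -/
def congJoin (A : Alg L) (θ φ : A.carrier → A.carrier → Prop) (x y : A.carrier) : Prop :=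
  ∀ ρ : A.carrier → A.carrier → Prop, IsCongruenceOn A ρ →
    (∀ a b, θ a b → ρ a b) → (∀ a b, φ a b → ρ a b) → ρ x y

/-- Congruence permutability for all members of a class. -/
def CongPermutableClass (K : Set (Alg L)) : Prop :=
  ∀ A : Alg L, A ∈ K → ∀ θ φ : A.carrier → A.carrier → Prop,
    IsCongruenceOn A θ → IsCongruenceOn A φ →
      ∀ x y : A.carrier, (∃ z, θ x z ∧ φ z y) ↔ ∃ z, φ x z ∧ θ z y

/-- Congruence distributivity for all members of a class. -/
def CongDistributiveClass (K : Set (Alg L)) : Prop :=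
  ∀ A : Alg L, A ∈ K → ∀ θ φ ψ : A.carrier → A.carrier → Prop,
    IsCongruenceOn A θ → IsCongruenceOn A φ → IsCongruenceOn A ψ →
      ∀ x y : A.carrier,
        (θ x y ∧ congJoin A φ ψ x y) ↔
          congJoin A (fun a b => θ a b ∧ φ a b) (fun a b => θ a b ∧ ψ a b) x y

/-- The congruence extension property. -/
def HasCEP (K : Set (Alg L)) : Prop :=
  ∀ A B : Alg L, A ∈ K → B ∈ K → ∀ e : A.carrier ↪[L] B.carrier,
    ∀ θ : A.carrier → A.carrier → Prop, IsCongruenceOn A θ →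
      ∃ ρ : B.carrier → B.carrier → Prop, IsCongruenceOn B ρ ∧
        ∀ x y : A.carrier, θ x y ↔ ρ (e x) (e y)

/-- The language consisting of one new function symbol `gᵢ` of arity `ar i` for each `i`. -/
def newLang {ι : Type u} (ar : ι → ℕ) : FirstOrder.Language.{u, u} where
  Functions := fun n => { i : ι // ar i = n }
  Relations := fun _ => PEmpty

/-- The `L`-reduct of an algebra in an expanded language `L.sum N`. -/
def algReduct {N : FirstOrder.Language.{u, u}} (B : Alg (L.sum N)) : Alg L where
  carrier := B.carrier
  str := (LHom.sumInl : L →ᴸ L.sum N).reduct B.carrier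

/-- The class `K[L_F]` of expansions of members of `K` on which each operation in the family
`f` is total, interpreting the new symbol `gᵢ` as `f i`. -/
def expClass (K : Set (Alg L)) {ι : Type u} (ar : ι → ℕ)
    (f : ∀ i, PartialFunOn K (ar i)) : Set (Alg (L.sum (newLang ar))) :=
  { B | ∃ hB : algReduct B ∈ K,
      ∀ (i : ι) (x : Fin (ar i) → B.carrier),
        Structure.funMap (L := L.sum (newLang ar)) (M := B.carrier)
            (Sum.inr ⟨i, rfl⟩ : (L.sum (newLang ar)).Functions (ar i)) x
          ∈ f i (algReduct B) hB x }

/-- Closure under subalgebras (and isomorphic copies) inside a fixed language. -/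
def SClosure {L' : FirstOrder.Language.{u, u}} (S : Set (Alg L')) : Set (Alg L') :=
  { A | ∃ B ∈ S, Nonempty (A.carrier ↪[L'] B.carrier) }

/-- Membership in `ext_pp(K)`: an extendable implicit operation defined by a pp formula. -/
def InExtPP {K : Set (Alg L)} {n : ℕ} (f : PartialFunOn K n) : Prop :=
  IsOperationOn f ∧ (∃ φ : L.Formula (Fin (n + 1)), IsPP φ ∧ DefinedBy f φ) ∧ Extendable f

/-- `M` is the pp expansion of `K` induced by the family `f` of extendable pp-definable
implicit operations, with one new symbol of arity `ar i` for each `i`. -/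
def IsPPExpansionVia (K : Set (Alg L)) {ι : Type u} (ar : ι → ℕ)
    (f : ∀ i, PartialFunOn K (ar i)) (M : Set (Alg (L.sum (newLang ar)))) : Prop :=
  (∀ i, 0 < ar i) ∧ (∀ i, InExtPP (f i)) ∧ M = SClosure (expClass K ar f)

/-- Every implicit operation of `K` is interpolated in `M` by a set of terms of the expanded
language. -/
def InterpolatesByTermsInExp (K : Set (Alg L)) {ι : Type u} {ar : ι → ℕ}
    (M : Set (Alg (L.sum (newLang ar)))) : Prop :=
  ∀ n : ℕ, 0 < n → ∀ g : PartialFunOn K n, IsImplicitOp g →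
    ∃ T : Set ((L.sum (newLang ar)).Term (Fin n)),
      ∀ A : Alg (L.sum (newLang ar)), A ∈ M →
        ∀ (hA : algReduct A ∈ K) (x : Fin n → A.carrier) (b : A.carrier),
          b ∈ g (algReduct A) hA x → ∃ t ∈ T, t.realize x = b

/-- `M` is a Beth companion of `K` (via the given expansion datum). -/
def IsBethCompanionVia (K : Set (Alg L)) {ι : Type u} (ar : ι → ℕ)
    (f : ∀ i, PartialFunOn K (ar i)) (M : Set (Alg (L.sum (newLang ar)))) : Prop :=
  IsPPExpansionVia K ar f M ∧ InterpolatesByTermsInExp K M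

/-- A pp expansion is congruence preserving when the `M`-congruences of each member of `M`
coincide with the `K`-congruences of its `L`-reduct. -/
def CongPreserving {N : FirstOrder.Language.{u, u}} (K : Set (Alg L))
    (M : Set (Alg (L.sum N))) : Prop :=
  ∀ A : Alg (L.sum N), A ∈ M → ∀ θ : A.carrier → A.carrier → Prop,
    IsRelCong M A θ ↔ IsRelCong K (algReduct A) θ

/-- Reinterpretation of an `L₁`-algebra as an `L₂`-algebra along a map sending `L₂`-symbols to
`L₁`-terms (both languages are assumed to be purely functional). -/
def reinterpret {L₁ L₂ : FirstOrder.Language.{u, u}} (ρ : ∀ n, L₂.Functions n → L₁.Term (Fin n))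
    (A : Alg L₁) : Alg L₂ where
  carrier := A.carrier
  str :=
    { funMap := fun {k} s x => (ρ k s).realize x
      RelMap := fun {k} _ _ => False }

/-- Two expansions of the same base language `L` are faithfully term equivalent relative to
`L`. -/
def FaithfullyTermEquivRel (L : FirstOrder.Language.{u, u}) {N₁ N₂ : FirstOrder.Language.{u, u}}
    (M₁ : Set (Alg (L.sum N₁))) (M₂ : Set (Alg (L.sum N₂))) : Prop :=
  ∃ (τ : ∀ n, (L.sum N₁).Functions n → (L.sum N₂).Term (Fin n))
    (ρ : ∀ n, (L.sum N₂).Functions n → (L.sum N₁).Term (Fin n)),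
    (∀ (n : ℕ) (s : L.Functions n),
      τ n (Sum.inl s) = Term.func (Sum.inl s : (L.sum N₂).Functions n) Term.var) ∧
    (∀ (n : ℕ) (s : L.Functions n),
      ρ n (Sum.inl s) = Term.func (Sum.inl s : (L.sum N₁).Functions n) Term.var) ∧
    (∀ A : Alg (L.sum N₁), A ∈ M₁ → reinterpret ρ A ∈ M₂) ∧
    (∀ B : Alg (L.sum N₂), B ∈ M₂ → reinterpret τ B ∈ M₁) ∧
    (∀ A : Alg (L.sum N₁), A ∈ M₁ → reinterpret τ (reinterpret ρ A) = A) ∧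
    (∀ B : Alg (L.sum N₂), B ∈ M₂ → reinterpret ρ (reinterpret τ B) = B)

/-- The language of Heyting algebras: two constants (`⊥`, `⊤`) and three binary operations
(`⊓`, `⊔`, `→`). -/
def Lheyt : FirstOrder.Language.{0, 0} where
  Functions := fun n => match n with
    | 0 => Fin 2
    | 2 => Fin 3
    | _ => PEmpty
  Relations := fun _ => PEmpty

instance : Lheyt.IsAlgebraic := fun _ => inferInstanceAs (IsEmpty PEmpty)

/-- The bottom symbol. -/
def botSym : Lheyt.Functions 0 := (0 : Fin 2)
/-- The top symbol. -/
def topSym : Lheyt.Functions 0 := (1 : Fin 2)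
/-- The meet symbol. -/
def meetSym : Lheyt.Functions 2 := (0 : Fin 3)
/-- The join symbol. -/
def joinSym : Lheyt.Functions 2 := (1 : Fin 3)
/-- The implication symbol. -/
def impSym : Lheyt.Functions 2 := (2 : Fin 3)

/-- Interpretation of `⊥`. -/
def hBot {M : Type} [Lheyt.Structure M] : M := Structure.funMap (L := Lheyt) botSym ![]
/-- Interpretation of `⊤`. -/
def hTop {M : Type} [Lheyt.Structure M] : M := Structure.funMap (L := Lheyt) topSym ![]
/-- Interpretation of the meet. -/
def hMeet {M : Type} [Lheyt.Structure M] (a b : M) : M :=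
  Structure.funMap (L := Lheyt) meetSym ![a, b]
/-- Interpretation of the join. -/
def hJoin {M : Type} [Lheyt.Structure M] (a b : M) : M :=
  Structure.funMap (L := Lheyt) joinSym ![a, b]
/-- Interpretation of the implication. -/
def hImp {M : Type} [Lheyt.Structure M] (a b : M) : M :=
  Structure.funMap (L := Lheyt) impSym ![a, b]
/-- The lattice order of an `Lheyt`-structure. -/
def hLe {M : Type} [Lheyt.Structure M] (a b : M) : Prop := hMeet a b = a

/-- The class of Heyting algebras: bounded distributive lattices with `a ⊓ b ≤ c ↔ a ≤ b → c`. -/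
def HeytingCl : Set (Alg Lheyt) :=
  { A | (∀ a b : A.carrier, hMeet a b = hMeet b a) ∧
        (∀ a b : A.carrier, hJoin a b = hJoin b a) ∧
        (∀ a b c : A.carrier, hMeet (hMeet a b) c = hMeet a (hMeet b c)) ∧
        (∀ a b c : A.carrier, hJoin (hJoin a b) c = hJoin a (hJoin b c)) ∧
        (∀ a b : A.carrier, hMeet a (hJoin a b) = a) ∧
        (∀ a b : A.carrier, hJoin a (hMeet a b) = a) ∧
        (∀ a b c : A.carrier, hMeet a (hJoin b c) = hJoin (hMeet a b) (hMeet a c)) ∧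
        (∀ a : A.carrier, hJoin a hBot = a) ∧
        (∀ a : A.carrier, hMeet a hTop = a) ∧
        (∀ a b c : A.carrier, hLe (hMeet a b) c ↔ hLe a (hImp b c)) }

/-- Heyting algebra structure on a member of `HeytingCl`. -/
noncomputable abbrev toHeyt (A : Alg Lheyt) (hA : A ∈ HeytingCl) : HeytingAlgebra A.carrier :=
  have mc := hA.1
  have jc := hA.2.1
  have ma := hA.2.2.1
  have ja := hA.2.2.2.1
  have mj := hA.2.2.2.2.1
  have jm := hA.2.2.2.2.2.1
  have jb := hA.2.2.2.2.2.2.2.1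
  have mt := hA.2.2.2.2.2.2.2.2.1
  have imp := hA.2.2.2.2.2.2.2.2.2
  have mi : ∀ a : A.carrier, hMeet a a = a := fun a => by
    have := mj a (hMeet a a)
    rwa [jm] at this
  have lej : ∀ a b : A.carrier, hLe a b → hJoin a b = b := fun a b h => by
    have h' : hMeet a b = a := h
    rw [← h', jc, mc a b, jm]
  have jle : ∀ a b : A.carrier, hJoin a b = b → hLe a b := fun a b h => by
    show hMeet a b = a
    rw [← h, mj]
  { le := hLe
    le_refl := mi
    le_trans := fun a b c hab hbc => by
      have hab' : hMeet a b = a := hab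
      have hbc' : hMeet b c = b := hbc
      show hMeet a c = a
      rw [← hab', ma, hbc']
    le_antisymm := fun a b hab hba => by
      have hab' : hMeet a b = a := hab
      have hba' : hMeet b a = b := hba
      rw [← hab', mc, hba']
    sup := hJoin
    inf := hMeet
    top := hTop
    bot := hBot
    himp := hImp
    compl := fun a => hImp a hBot
    le_sup_left := fun a b => mj a b
    le_sup_right := fun a b => by
      show hMeet b (hJoin a b) = b
      rw [jc, mj]
    sup_le := fun a b c hac hbc => by
      apply jle
      show hJoin (hJoin a b) c = c
      rw [ja, lej b c hbc, lej a c hac]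
    inf_le_left := fun a b => by
      show hMeet (hMeet a b) a = hMeet a b
      rw [mc, ← ma, mi]
    inf_le_right := fun a b => by
      show hMeet (hMeet a b) b = hMeet a b
      rw [ma, mi]
    le_inf := fun a b c hab hac => by
      have hab' : hMeet a b = a := hab
      have hac' : hMeet a c = a := hac
      show hMeet a (hMeet b c) = a
      rw [← ma, hab', hac']
    le_top := fun a => mt a
    bot_le := fun a => by
      apply jle
      show hJoin hBot a = a
      rw [jc, jb]
    le_himp_iff := fun a b c => (imp a b c).symm
    himp_bot := fun a => rfl }

/-- Existence of an ultrafilter containing a nonzero element. -/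
theorem exists_ultra {H : Type} [HeytingAlgebra H] (a : H) (ha : a ≠ ⊥) :
    ∃ U : Set H, a ∈ U ∧ ⊥ ∉ U ∧ (∀ x y, x ⊓ y ∈ U ↔ x ∈ U ∧ y ∈ U) ∧
      (∀ x y, x ⊔ y ∈ U ↔ x ∈ U ∨ y ∈ U) ∧ (∀ x y, x ⇨ y ∈ U ↔ (x ∈ U → y ∈ U)) ∧ ⊤ ∈ U := by
  let S : Set (Set H) := {F | ⊥ ∉ F ∧ ∀ x y, x ⊓ y ∈ F ↔ x ∈ F ∧ y ∈ F}
  obtain ⟨U, hsub, hmax⟩ := zorn_subset_nonempty S (by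
    intro c hc hch ⟨F0, hF0⟩
    refine ⟨⋃₀ c, ⟨?_, ?_⟩, fun s hs => Set.subset_sUnion_of_mem hs⟩
    · rintro ⟨F, hF, hb⟩
      exact (hc hF).1 hb
    · intro x y
      constructor
      · rintro ⟨F, hF, hb⟩
        have := ((hc hF).2 x y).1 hb
        exact ⟨⟨F, hF, this.1⟩, ⟨F, hF, this.2⟩⟩
      · rintro ⟨⟨F, hF, hx⟩, ⟨G, hG, hy⟩⟩
        rcases hch.total hF hG with h | h
        · exact ⟨G, hG, ((hc hG).2 x y).2 ⟨h hx, hy⟩⟩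
        · exact ⟨F, hF, ((hc hF).2 x y).2 ⟨hx, h hy⟩⟩) (Set.Ici a) (by
    refine ⟨?_, ?_⟩
    · simpa using ha
    · intro x y
      simp)
  have haU : a ∈ U := hsub (Set.mem_Ici.2 le_rfl)
  obtain ⟨hbot, hinf⟩ := hmax.prop
  have up : ∀ x y, x ≤ y → x ∈ U → y ∈ U := fun x y hxy hx => by
    have : x ⊓ y ∈ U := by rwa [inf_eq_left.2 hxy]
    exact ((hinf x y).1 this).2
  have hcompl : ∀ x, x ∉ U → xᶜ ∈ U := by
    intro x hx
    by_contra hxc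
    let V : Set H := {z | ∃ u ∈ U, u ⊓ x ≤ z}
    have hV : V ∈ S := by
      refine ⟨?_, ?_⟩
      · rintro ⟨u, hu, hux⟩
        exact hxc (up u _ (le_compl_iff_disjoint_right.2 (disjoint_iff_inf_le.2 hux)) hu)
      · intro y z
        constructor
        · rintro ⟨u, hu, h⟩
          exact ⟨⟨u, hu, h.trans inf_le_left⟩, ⟨u, hu, h.trans inf_le_right⟩⟩
        · rintro ⟨⟨u, hu, h⟩, ⟨v, hv, h'⟩⟩
          refine ⟨u ⊓ v, (hinf u v).2 ⟨hu, hv⟩, le_inf ?_ ?_⟩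
          · exact (inf_le_inf_right x inf_le_left).trans h
          · exact (inf_le_inf_right x inf_le_right).trans h'
    have hUV : U ⊆ V := fun u hu => ⟨u, hu, inf_le_left⟩
    exact hx (hmax.le_of_ge hV hUV ⟨a, haU, inf_le_right⟩)
  have hdis : ∀ x, x ∈ U → xᶜ ∈ U → False := fun x hx hxc =>
    hbot (by simpa using (hinf x xᶜ).2 ⟨hx, hxc⟩)
  refine ⟨U, haU, hbot, hinf, ?_, ?_, up a ⊤ le_top haU⟩
  · intro x y
    constructor
    · intro h
      by_contra hn
      push Not at hn
      have := (hinf _ _).2 ⟨hcompl x hn.1, hcompl y hn.2⟩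
      rw [← compl_sup] at this
      exact hdis _ h this
    · rintro (h | h)
      · exact up _ _ le_sup_left h
      · exact up _ _ le_sup_right h
  · intro x y
    constructor
    · intro h hx
      have := (hinf _ _).2 ⟨h, hx⟩
      exact up _ _ (by simp) this
    · intro h
      by_cases hx : x ∈ U
      · exact up y _ (by simp) (h hx)
      · exact up xᶜ _ compl_le_himp (hcompl x hx)

open Classical in
/-- The endomorphism collapsing the factor below `b` to a two-element algebra. -/
noncomputable def collapse {H : Type} [HeytingAlgebra H] (a b : H) (U : Set H) (x : H) : H :=
  (x ⊓ a) ⊔ (if x ∈ U then b else ⊥)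

theorem split_ext {H : Type} [HeytingAlgebra H] {a b : H} (hab : a ⊔ b = ⊤) {x y : H}
    (h1 : x ⊓ a = y ⊓ a) (h2 : x ⊓ b = y ⊓ b) : x = y := by
  rw [← inf_top_eq x, ← inf_top_eq y, ← hab, inf_sup_left, inf_sup_left, h1, h2]

theorem collapse_inf_a {H : Type} [HeytingAlgebra H] {a b : H} (hd : a ⊓ b = ⊥) (U : Set H)
    (x : H) : collapse a b U x ⊓ a = x ⊓ a := by
  unfold collapse
  split_ifs
  · rw [inf_sup_right, inf_comm b a, hd]; simp [inf_assoc]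
  · simp [inf_assoc]

open Classical in
theorem collapse_inf_b {H : Type} [HeytingAlgebra H] {a b : H} (hd : a ⊓ b = ⊥) (U : Set H)
    (x : H) : collapse a b U x ⊓ b = if x ∈ U then b else ⊥ := by
  unfold collapse
  split_ifs
  · rw [inf_sup_right, inf_assoc, hd]; simp
  · rw [inf_sup_right, inf_assoc, hd]; simp

theorem himp_inf_eq {H : Type} [HeytingAlgebra H] (x y a : H) :
    (x ⇨ y) ⊓ a = ((x ⊓ a) ⇨ (y ⊓ a)) ⊓ a := by
  apply le_antisymm
  · refine le_inf ?_ inf_le_right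
    rw [le_himp_iff]
    refine le_inf ?_ (inf_le_left.trans inf_le_right)
    calc (x ⇨ y) ⊓ a ⊓ (x ⊓ a) ≤ (x ⇨ y) ⊓ x :=
          inf_le_inf inf_le_left inf_le_left
      _ ≤ y := by simp
  · refine le_inf ?_ inf_le_right
    rw [le_himp_iff]
    calc ((x ⊓ a) ⇨ (y ⊓ a)) ⊓ a ⊓ x = ((x ⊓ a) ⇨ (y ⊓ a)) ⊓ (x ⊓ a) := by
          rw [inf_assoc, inf_comm a x]
      _ ≤ y ⊓ a := himp_inf_le
      _ ≤ y := inf_le_left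

/-- All the homomorphism properties of `collapse`. -/
theorem exists_collapse {H : Type} [HeytingAlgebra H] {a b : H} (hab : a ⊔ b = ⊤)
    (hd : a ⊓ b = ⊥) (ha : a ≠ ⊥) :
    ∃ φ : H → H, φ ⊥ = ⊥ ∧ φ ⊤ = ⊤ ∧ (∀ x y, φ (x ⊓ y) = φ x ⊓ φ y) ∧
      (∀ x y, φ (x ⊔ y) = φ x ⊔ φ y) ∧ (∀ x y, φ (x ⇨ y) = φ x ⇨ φ y) ∧
      (∀ x, φ x ⊓ a = x ⊓ a) ∧ φ b = ⊥ := by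
  obtain ⟨U, haU, hbot, hinf, hsup, himp, htop⟩ := exists_ultra a ha
  have hbU : b ∉ U := fun hb => hbot (hd ▸ (hinf a b).2 ⟨haU, hb⟩)
  have A := collapse_inf_a hd U
  have Bb := collapse_inf_b hd U
  refine ⟨collapse a b U, ?_, ?_, ?_, ?_, ?_, A, ?_⟩
  · simp [collapse, hbot]
  · simp [collapse, htop, hab]
  · intro x y
    apply split_ext hab
    · rw [A, inf_inf_distrib_right x y a,
        inf_inf_distrib_right (collapse a b U x) (collapse a b U y) a, A, A]
    · rw [inf_inf_distrib_right (collapse a b U x) (collapse a b U y) b, Bb, Bb, Bb, hinf]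
      by_cases hx : x ∈ U <;> by_cases hy : y ∈ U <;> simp [hx, hy]
  · intro x y
    apply split_ext hab
    · rw [A, inf_sup_right, inf_sup_right, A, A]
    · rw [inf_sup_right, Bb, Bb, Bb, hsup]
      by_cases hx : x ∈ U <;> by_cases hy : y ∈ U <;> simp [hx, hy]
  · intro x y
    apply split_ext hab
    · rw [A, himp_inf_eq (collapse a b U x), A, A, ← himp_inf_eq]
    · rw [himp_inf_eq (collapse a b U x), Bb, Bb, Bb, himp]
      by_cases hx : x ∈ U <;> by_cases hy : y ∈ U <;> simp [hx, hy]
  · simp [collapse, hbU, inf_comm b a, hd]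

/-- Package a map preserving the Heyting operations as an `Lheyt`-homomorphism. -/
def mkHom {M N : Type} [Lheyt.Structure M] [Lheyt.Structure N] (φ : M → N)
    (hb : φ hBot = hBot) (ht : φ hTop = hTop) (hm : ∀ x y, φ (hMeet x y) = hMeet (φ x) (φ y))
    (hj : ∀ x y, φ (hJoin x y) = hJoin (φ x) (φ y))
    (hi : ∀ x y, φ (hImp x y) = hImp (φ x) (φ y)) : M →[Lheyt] N where
  toFun := φ
  map_fun' := by
    intro n f x
    match n, f with
    | 0, f =>
      have e1 : x = ![] := Subsingleton.elim _ _
      have e2 : φ ∘ x = ![] := Subsingleton.elim _ _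
      rw [e2, e1]
      change Fin 2 at f
      fin_cases f
      · exact hb
      · exact ht
    | 1, f => exact PEmpty.elim f
    | 2, f =>
      have e1 : x = ![x 0, x 1] := by ext i; fin_cases i <;> rfl
      have e2 : φ ∘ x = ![φ (x 0), φ (x 1)] := by ext i; fin_cases i <;> rfl
      rw [e2, e1]
      change Fin 3 at f
      fin_cases f
      · exact hm _ _
      · exact hj _ _
      · exact hi _ _
    | (n + 3), f => exact PEmpty.elim f
  map_rel' := fun r => PEmpty.elim r

/-- In a relatively finitely subdirectly irreducible member, complemented elements are
trivial. -/
theorem rfsi_compl {K : Set (Alg Lheyt)} (hKH : K ⊆ HeytingCl) (hQ : IsQuasivariety K)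
    (B : Alg Lheyt) (hB : IsRFSI K B) (a b : B.carrier) (hab : hJoin a b = hTop)
    (hd : hMeet a b = hBot) : a = hTop ∨ b = hTop := by
  letI := toHeyt B (hKH hB.1)
  have hab' : a ⊔ b = ⊤ := hab
  have hd' : a ⊓ b = ⊥ := hd
  show a = ⊤ ∨ b = ⊤
  by_contra hn
  push Not at hn
  have ha0 : a ≠ ⊥ := fun h => hn.2 (by simpa [h] using hab')
  have hb0 : b ≠ ⊥ := fun h => hn.1 (by simpa [h] using hab')
  obtain ⟨φ, φb, φt, φm, φj, φi, φa, φ0⟩ := exists_collapse hab' hd' ha0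
  obtain ⟨ψ, ψb, ψt, ψm, ψj, ψi, ψa, ψ0⟩ :=
    exists_collapse (a := b) (b := a) (by rwa [sup_comm]) (by rwa [inf_comm]) hb0
  let Φ : B.carrier →[Lheyt] B.carrier := mkHom φ φb φt φm φj φi
  let Ψ : B.carrier →[Lheyt] B.carrier := mkHom ψ ψb ψt ψm ψj ψi
  let F : Bool → (B.carrier →[Lheyt] B.carrier) := fun i => if i then Φ else Ψ
  let C : Bool → Alg Lheyt := fun i => ⟨(F i).range⟩
  have hC : ∀ i, C i ∈ K := fun i =>
    hQ.2.1 (C i) B hB.1 ⟨(F i).range.subtype⟩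
  let e : B.carrier ↪[Lheyt] (Alg.pi C).carrier :=
    { toFun := fun x i => ⟨F i x, ⟨x, rfl⟩⟩
      inj' := by
        intro x y hxy
        have h1 : φ x = φ y := congrArg Subtype.val (congrFun hxy true)
        have h2 : ψ x = ψ y := congrArg Subtype.val (congrFun hxy false)
        refine split_ext hab' ?_ ?_
        · rw [← φa x, ← φa y, h1]
        · rw [← ψa x, ← ψa y, h2]
      map_fun' := by
        intro n f x
        funext i
        apply Subtype.ext
        exact (F i).map_fun f x
      map_rel' := fun r => PEmpty.elim r }
  obtain ⟨i, hi⟩ := hB.2 Bool inferInstance C hC e (by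
    rintro i ⟨_, x, rfl⟩
    exact ⟨x, rfl⟩)
  cases i with
  | true =>
    apply hb0
    apply hi.1
    apply Subtype.ext
    show φ b = φ ⊥
    rw [φ0, φb]
  | false =>
    apply ha0
    apply hi.1
    apply Subtype.ext
    show ψ a = ψ ⊥
    rw [ψ0, ψb]

/-- Let `K` be a relatively congruence distributive quasivariety of Heyting
algebras, `A₁, A₂` Heyting algebras, `B ∈ K_rfsi`, and `h : A₁ × A₂ → B` a homomorphism. Then
`h` factors through one of the two canonical projections. -/
theorem statement_19 {K : Set (Alg Lheyt)} (hKH : K ⊆ HeytingCl)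
    (hQ : IsQuasivariety K) (hRCD : RelCongDistributive K)
    (A₁ A₂ : Alg Lheyt) (h₁ : A₁ ∈ HeytingCl) (h₂ : A₂ ∈ HeytingCl)
    (B : Alg Lheyt) (hB : IsRFSI K B)
    (h : (Alg.prod A₁ A₂).carrier →[Lheyt] B.carrier) :
    (∃ g : A₁.carrier →[Lheyt] B.carrier,
        ∀ p : A₁.carrier × A₂.carrier, h p = g p.1) ∨
    (∃ g : A₂.carrier →[Lheyt] B.carrier,
        ∀ p : A₁.carrier × A₂.carrier, h p = g p.2) := by
  have hBH := hKH hB.1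
  have hmm : ∀ p q : (Alg.prod A₁ A₂).carrier, h (hMeet p q) = hMeet (h p) (h q) := by
    intro p q
    refine (h.map_fun meetSym ![p, q]).trans ?_
    show Structure.funMap meetSym (h ∘ ![p, q]) = Structure.funMap meetSym ![h p, h q]
    congr 1
    ext i; fin_cases i <;> rfl
  have hjj : ∀ p q : (Alg.prod A₁ A₂).carrier, h (hJoin p q) = hJoin (h p) (h q) := by
    intro p q
    refine (h.map_fun joinSym ![p, q]).trans ?_
    show Structure.funMap joinSym (h ∘ ![p, q]) = Structure.funMap joinSym ![h p, h q]
    congr 1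
    ext i; fin_cases i <;> rfl
  have htt : h hTop = hTop := by
    refine (h.map_fun topSym ![]).trans ?_
    show Structure.funMap topSym (h ∘ ![]) = Structure.funMap topSym ![]
    congr 1
    exact Subsingleton.elim _ _
  have hbb : h hBot = hBot := by
    refine (h.map_fun botSym ![]).trans ?_
    show Structure.funMap botSym (h ∘ ![]) = Structure.funMap botSym ![]
    congr 1
    exact Subsingleton.elim _ _
  have pm : ∀ (x x' : A₁.carrier) (y y' : A₂.carrier),
      (hMeet ((x, y) : (Alg.prod A₁ A₂).carrier) (x', y') : (Alg.prod A₁ A₂).carrier)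
        = (hMeet x x', hMeet y y') := by
    intro x x' y y'
    apply Prod.ext
    · show Structure.funMap meetSym _ = Structure.funMap meetSym _
      congr 1
      ext i; fin_cases i <;> rfl
    · show Structure.funMap meetSym _ = Structure.funMap meetSym _
      congr 1
      ext i; fin_cases i <;> rfl
  have pj : ∀ (x x' : A₁.carrier) (y y' : A₂.carrier),
      (hJoin ((x, y) : (Alg.prod A₁ A₂).carrier) (x', y') : (Alg.prod A₁ A₂).carrier)
        = (hJoin x x', hJoin y y') := by
    intro x x' y y'
    apply Prod.ext
    · show Structure.funMap joinSym _ = Structure.funMap joinSym _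
      congr 1
      ext i; fin_cases i <;> rfl
    · show Structure.funMap joinSym _ = Structure.funMap joinSym _
      congr 1
      ext i; fin_cases i <;> rfl
  have pt : (hTop : (Alg.prod A₁ A₂).carrier) = (hTop, hTop) := by
    apply Prod.ext
    · show Structure.funMap topSym _ = Structure.funMap topSym _
      congr 1
      exact Subsingleton.elim _ _
    · show Structure.funMap topSym _ = Structure.funMap topSym _
      congr 1
      exact Subsingleton.elim _ _
  have pb : (hBot : (Alg.prod A₁ A₂).carrier) = (hBot, hBot) := by
    apply Prod.ext
    · show Structure.funMap botSym _ = Structure.funMap botSym _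
      congr 1
      exact Subsingleton.elim _ _
    · show Structure.funMap botSym _ = Structure.funMap botSym _
      congr 1
      exact Subsingleton.elim _ _
  have m0 : ∀ (A : Alg Lheyt), A ∈ HeytingCl → ∀ x : A.carrier, hMeet x hBot = hBot := by
    intro A hA x
    letI := toHeyt A hA
    exact inf_bot_eq x
  have mt : ∀ (A : Alg Lheyt), A ∈ HeytingCl → ∀ x : A.carrier, hMeet x hTop = x := by
    intro A hA x
    letI := toHeyt A hA
    exact inf_top_eq x
  have tm : ∀ (A : Alg Lheyt), A ∈ HeytingCl → ∀ x : A.carrier, hMeet hTop x = x := by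
    intro A hA x
    letI := toHeyt A hA
    exact top_inf_eq x
  have jt : ∀ (A : Alg Lheyt), A ∈ HeytingCl → ∀ x : A.carrier, hJoin x hTop = hTop := by
    intro A hA x
    letI := toHeyt A hA
    exact sup_top_eq x
  have tj : ∀ (A : Alg Lheyt), A ∈ HeytingCl → ∀ x : A.carrier, hJoin hTop x = hTop := by
    intro A hA x
    letI := toHeyt A hA
    exact top_sup_eq x
  let a : (Alg.prod A₁ A₂).carrier := (hTop, hBot)
  let b : (Alg.prod A₁ A₂).carrier := (hBot, hTop)
  have hab : hJoin (h a) (h b) = hTop := by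
    rw [← hjj, ← htt, pt]
    congr 1
    rw [pj, tj A₁ h₁, jt A₂ h₂]
  have hd : hMeet (h a) (h b) = hBot := by
    rw [← hmm, ← hbb, pb]
    congr 1
    rw [pm, m0 A₁ h₁, mt A₂ h₂]
  rcases rfsi_compl hKH hQ B hB (h a) (h b) hab hd with ha | hb
  · left
    have key : ∀ (x : A₁.carrier) (y y' : A₂.carrier),
        h ((x, y) : (Alg.prod A₁ A₂).carrier) = h ((x, y') : (Alg.prod A₁ A₂).carrier) := by
      intro x y y'
      have e : ∀ p : (Alg.prod A₁ A₂).carrier, h p = h (hMeet p a) := fun p => by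
        rw [hmm, ha, mt B hBH]
      exact (e (x, y)).trans ((congrArg h ((pm x hTop y hBot).trans
        ((congrArg (fun z => ((hMeet x hTop : A₁.carrier), z)) ((m0 A₂ h₂ y).trans (m0 A₂ h₂ y').symm)).trans
          (pm x hTop y' hBot).symm))).trans (e (x, y')).symm)
    refine ⟨⟨fun x => h ((x, hTop) : (Alg.prod A₁ A₂).carrier), ?_, fun r => PEmpty.elim r⟩, ?_⟩
    · intro n f x
      refine (key _ _ (Structure.funMap f fun _ => hTop)).trans ?_
      exact h.map_fun f (fun i => ((x i, hTop) : (Alg.prod A₁ A₂).carrier))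
    · rintro ⟨x, y⟩
      exact key _ _ _
  · right
    have key : ∀ (x x' : A₁.carrier) (y : A₂.carrier),
        h ((x, y) : (Alg.prod A₁ A₂).carrier) = h ((x', y) : (Alg.prod A₁ A₂).carrier) := by
      intro x x' y
      have e : ∀ p : (Alg.prod A₁ A₂).carrier, h p = h (hMeet p b) := fun p => by
        rw [hmm, hb, mt B hBH]
      exact (e (x, y)).trans ((congrArg h ((pm x hBot y hTop).trans
        ((congrArg (fun z => (z, (hMeet y hTop : A₂.carrier))) ((m0 A₁ h₁ x).trans (m0 A₁ h₁ x').symm)).trans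
          (pm x' hBot y hTop).symm))).trans (e (x', y)).symm)
    refine ⟨⟨fun y => h ((hTop, y) : (Alg.prod A₁ A₂).carrier), ?_, fun r => PEmpty.elim r⟩, ?_⟩
    · intro n f y
      refine (key _ (Structure.funMap f fun _ => hTop) _).trans ?_
      exact h.map_fun f (fun i => ((hTop, y i) : (Alg.prod A₁ A₂).carrier))
    · rintro ⟨x, y⟩
      exact key _ _ _

end Impl
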